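/- Assume λ, α, θ > 0, β + θ < 1, (H2), m_τ, K_τ > 0 and 0 < τ < 1. Then for every (X, ρ) ∈ 𝒜 one has J_{(X⁰,ρ⁰)}(X, ρ) ≥ −(1/(2λ))(α + exp(β−1) − β)² − X⁰(α + exp(β−1) − β); in particular J_{(X⁰,ρ⁰)} is bounded below on 𝒜. -/

import Mathlib

/-!
The functional is a quadratic in `X` plus nonnegative terms, once the entropy is bounded below.
Set `c = exp (β - 1) - β ≥ 0`. The convex function `f` attains its minimum `-c` over `[0, ∞)` at
`exp (β - 1)` (`fEnt_ge`), and `f 1 = 0`; since `ρ = 1` a.e. beyond `x_ρ ≤ X`, integrating gives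
`∫ f(ρ) ≥ -c X` (`integral_fEnt_ge`). The Wasserstein, mass and penalty terms are nonnegative, so
with `a = α + c` and `τ < 1` the functional is at least
`(λ/2) (X - X⁰)² - a X = (λ/2) (X - X⁰ - a/λ)² - a²/(2λ) - a X⁰`.
-/

open MeasureTheory Real Set ENNReal Filter Topology

noncomputable section

/-- The threshold `ρ₋ = exp(β - θ - 1)`. -/
def rhoMinus (β θ : ℝ) : ℝ := Real.exp (β - θ - 1)

/-- The threshold `ρ₊ = exp(β + θ - 1)`. -/
def rhoPlus (β θ : ℝ) : ℝ := Real.exp (β + θ - 1)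

/-- Membership in the class `𝔸` of admissible densities on `ℝ₊`:
nonnegative a.e., locally integrable together with `ρ ln ρ`, and `≡ 1` a.e. eventually. -/
def MemAdm (ρ : ℝ → ℝ) : Prop :=
  (∀ᵐ x : ℝ, 0 < x → 0 ≤ ρ x) ∧
  LocallyIntegrableOn ρ (Ioi 0) volume ∧
  LocallyIntegrableOn (fun x => ρ x * Real.log (ρ x)) (Ioi 0) volume ∧
  ∃ x : ℝ, 0 < x ∧ (∀ᵐ y : ℝ, y ∈ Ioi x → ρ y = 1)

/-- `x_ρ`, the infimum of the points after which `ρ ≡ 1` a.e. -/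
def xA (ρ : ℝ → ℝ) : ℝ :=
  sInf {x : ℝ | 0 < x ∧ ∀ᵐ y : ℝ, y ∈ Ioi x → ρ y = 1}

/-- Membership of a pair `(X, ρ)` in the admissible set `𝒜`. -/
def MemAdmSet (X : ℝ) (ρ : ℝ → ℝ) : Prop := MemAdm ρ ∧ xA ρ ≤ X

/-- `𝐌(ρ) = -∫_{ℝ₊} (1 - ρ)`. -/
def Mfun (ρ : ℝ → ℝ) : ℝ := -∫ x in Ioi (0:ℝ), (1 - ρ x)

/-- `M(ρ, ρ̃) = 𝐌(ρ) - 𝐌(ρ̃)`. -/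
def Mdiff (ρ ρt : ℝ → ℝ) : ℝ := Mfun ρ - Mfun ρt

/-- `f(r) = r (ln r - β) + β`. -/
def fEnt (β r : ℝ) : ℝ := r * (Real.log r - β) + β

/-- The measure `ν(ρ, ρ̃) = ρ · Leb⌊(0,Λ) + (M(ρ̃,ρ))₊ δ₀`, `Λ = max(x_ρ, x_ρ̃)`. -/
def nuMeas (ρ ρt : ℝ → ℝ) : Measure ℝ :=
  (volume.withDensity (fun x => ENNReal.ofReal (ρ x))).restrict
      (Ioo 0 (max (xA ρ) (xA ρt)))
    + (ENNReal.ofReal (Mdiff ρt ρ)) • Measure.dirac 0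

/-- The squared Wasserstein distance `𝐖₂²(ρ, ρ̃)`: infimum of the quadratic transport
cost over couplings of `ν(ρ,ρ̃)` and `ν(ρ̃,ρ)`. -/
def W2sq (ρ ρt : ℝ → ℝ) : ℝ :=
  sInf {r : ℝ | ∃ γ : Measure (ℝ × ℝ),
    γ.map Prod.fst = nuMeas ρ ρt ∧ γ.map Prod.snd = nuMeas ρt ρ ∧
    r = ∫ p, (p.1 - p.2)^2 ∂γ}

/-- The penalty function `p_τ(m) = (K_τ/2) ((-m - m_τ)₊)²`. -/
def ptau (Kτ mτ m : ℝ) : ℝ := Kτ / 2 * (max (-m - mτ) 0)^2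

/-- The energy functional `E_{(X⁰,ρ⁰)}(X,ρ)`. -/
def Efun (α β θ : ℝ) (ρ0 : ℝ → ℝ) (X : ℝ) (ρ : ℝ → ℝ) : ℝ :=
  (∫ x in Ioi (0:ℝ), fEnt β (ρ x)) + θ * |Mdiff ρ ρ0| - α * X

/-- The squared tensorized metric `𝐝²((X,ρ),(X⁰,ρ⁰))`. -/
def dsq (lam : ℝ) (X0 : ℝ) (ρ0 : ℝ → ℝ) (X : ℝ) (ρ : ℝ → ℝ) : ℝ :=
  W2sq ρ ρ0 + lam * (X - X0)^2

/-- The JKO functional `J_{(X⁰,ρ⁰)}`. -/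
def Jfun (lam α β θ τ Kτ mτ : ℝ) (X0 : ℝ) (ρ0 : ℝ → ℝ) (X : ℝ) (ρ : ℝ → ℝ) : ℝ :=
  dsq lam X0 ρ0 X ρ / (2 * τ) + Efun α β θ ρ0 X ρ + ptau Kτ mτ (Mdiff ρ ρ0)

/-- `(X, ρ)` is a minimizer of the JKO functional over `𝒜`. -/
def IsJKOMin (lam α β θ τ Kτ mτ : ℝ) (X0 : ℝ) (ρ0 : ℝ → ℝ) (X : ℝ) (ρ : ℝ → ℝ) : Prop :=
  MemAdmSet X ρ ∧
  ∀ Y : ℝ, ∀ σ : ℝ → ℝ, MemAdmSet Y σ →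
    Jfun lam α β θ τ Kτ mτ X0 ρ0 X ρ ≤ Jfun lam α β θ τ Kτ mτ X0 ρ0 Y σ

/-- Hypothesis (H2) on the initial data `(X⁰, ρ⁰)`, with bounds `ρ_min, ρ_max`
and with `ρ0'` a derivative of `ρ⁰` on `[0,X⁰]` witnessing `C^{1,1}` regularity. -/
def H2 (β θ X0 ρmin ρmax : ℝ) (ρ0 ρ0' : ℝ → ℝ) : Prop :=
  0 < X0 ∧
  (∀ x : ℝ, 0 < ρ0 x) ∧
  (∀ x ∈ Icc 0 X0, HasDerivWithinAt ρ0 (ρ0' x) (Icc 0 X0) x) ∧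
  (∃ K : NNReal, LipschitzOnWith K ρ0' (Icc 0 X0)) ∧
  (∀ x : ℝ, X0 < x → ρ0 x = 1) ∧
  ρ0 0 ∈ Icc (rhoMinus β θ) (rhoPlus β θ) ∧
  0 < ρmin ∧ (∀ x ∈ Ioc 0 X0, ρmin ≤ ρ0 x ∧ ρ0 x ≤ ρmax) ∧ ρmax ≤ 1

/-- The monotone transport structure in the case `M(ρ,ρ⁰) ≥ 0`: a nondecreasing map
`T₊ : [0,X] → [0,X]`, vanishing on `[0,ℓ₊]`, pushing `ρ·Leb⌊(ℓ₊,X)` to `ρ⁰·Leb⌊(0,X)`,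
with `M = ∫₀^{ℓ₊} ρ` and realizing the squared Wasserstein distance. -/
def TransportPlus (ρ0 ρ : ℝ → ℝ) (X : ℝ) (T : ℝ → ℝ) (ℓ : ℝ) : Prop :=
  0 ≤ ℓ ∧ Measurable T ∧ MonotoneOn T (Icc 0 X) ∧
  (∀ x ∈ Icc 0 X, T x ∈ Icc 0 X) ∧
  (∀ x ∈ Icc 0 ℓ, T x = 0) ∧ T X = X ∧
  Measure.map T ((volume.withDensity (fun x => ENNReal.ofReal (ρ x))).restrict (Ioo ℓ X))
    = (volume.withDensity (fun x => ENNReal.ofReal (ρ0 x))).restrict (Ioo 0 X) ∧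
  Mdiff ρ ρ0 = ∫ x in (0:ℝ)..ℓ, ρ x ∧
  W2sq ρ ρ0 = ∫ x in (0:ℝ)..X, (x - T x)^2 * ρ x

/-- The monotone transport structure in the case `M(ρ,ρ⁰) < 0`. -/
def TransportMinus (ρ0 ρ : ℝ → ℝ) (X : ℝ) (T : ℝ → ℝ) (ℓ : ℝ) : Prop :=
  0 < ℓ ∧ Measurable T ∧ MonotoneOn T (Icc 0 X) ∧
  (∀ x ∈ Icc 0 X, T x ∈ Icc ℓ X) ∧
  T 0 = ℓ ∧ T X = X ∧
  Measure.map T ((volume.withDensity (fun x => ENNReal.ofReal (ρ x))).restrict (Ioo 0 X))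
    = (volume.withDensity (fun x => ENNReal.ofReal (ρ0 x))).restrict (Ioo ℓ X) ∧
  -(Mdiff ρ ρ0) = ∫ y in (0:ℝ)..ℓ, ρ0 y ∧
  W2sq ρ ρ0 = (∫ x in (0:ℝ)..X, (x - T x)^2 * ρ x) + ∫ y in (0:ℝ)..ℓ, y^2 * ρ0 y

/-- Transport structure with sign convention: `T` is `T₊` (with some `ℓ₊`, and `ℓ₋ = ℓ`
is taken `= 0`) when `M ≥ 0`, and `T₋` with `ℓ₋ = ℓ > 0` when `M < 0`. -/
def TransportStruct (ρ0 ρ : ℝ → ℝ) (X : ℝ) (T : ℝ → ℝ) (ℓ : ℝ) : Prop :=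
  (0 ≤ Mdiff ρ ρ0 ∧ ℓ = 0 ∧ ∃ ℓp : ℝ, TransportPlus ρ0 ρ X T ℓp) ∨
  (Mdiff ρ ρ0 < 0 ∧ TransportMinus ρ0 ρ X T ℓ)

/-- `ρ̄` is the continuous representative of `ρ` on `[0,X]`. -/
def ContRep (X : ℝ) (ρ ρb : ℝ → ℝ) : Prop :=
  ContinuousOn ρb (Icc 0 X) ∧ (∀ᵐ x : ℝ, x ∈ Ioo 0 X → ρ x = ρb x)

lemma exp_sub_nonneg (β : ℝ) : 0 ≤ Real.exp (β - 1) - β := by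
  linarith [Real.add_one_le_exp (β - 1)]

lemma fEnt_ge (β r : ℝ) (hr : 0 ≤ r) : -(Real.exp (β - 1) - β) ≤ fEnt β r := by
  unfold fEnt
  rcases hr.eq_or_lt with rfl | h
  · simp only [zero_mul, zero_add]
    linarith [Real.exp_pos (β - 1)]
  · -- `log y ≤ y - 1` at `y = exp (β - 1) / r`, multiplied by `r`
    have h1 := Real.log_le_sub_one_of_pos (div_pos (Real.exp_pos (β - 1)) h)
    rw [Real.log_div (Real.exp_pos _).ne' h.ne', Real.log_exp] at h1
    have h2 := mul_le_mul_of_nonneg_left h1 h.le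
    have h3 : r * (Real.exp (β - 1) / r - 1) = Real.exp (β - 1) - r := by
      field_simp
    nlinarith

/-- The Bochner integral is `0` when `f ∘ ρ` is not integrable on `(0, ∞)` (local integrability is
only assumed away from `0`); the bound then holds because its left-hand side is nonpositive. -/
lemma integral_fEnt_ge_of_ae_one (β x : ℝ) (ρ : ℝ → ℝ) (h0 : ∀ᵐ y : ℝ, 0 < y → 0 ≤ ρ y)
    (hx : 0 < x) (h1 : ∀ᵐ y : ℝ, y ∈ Ioi x → ρ y = 1) :
    -(Real.exp (β - 1) - β) * x ≤ ∫ y in Ioi (0:ℝ), fEnt β (ρ y) := by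
  have hc := exp_sub_nonneg β
  by_cases hI : IntegrableOn (fun y => fEnt β (ρ y)) (Ioi 0)
  · have hg : IntegrableOn ((Ioc 0 x).indicator fun _ => -(Real.exp (β - 1) - β)) (Ioi 0) :=
      ((integrable_indicator_iff measurableSet_Ioc).2
        (integrableOn_const (by simp))).integrableOn
    have hint : ∫ y in Ioi (0:ℝ), (Ioc 0 x).indicator (fun _ => -(Real.exp (β - 1) - β)) y
        = -(Real.exp (β - 1) - β) * x := by
      rw [setIntegral_indicator measurableSet_Ioc,
        inter_eq_self_of_subset_right Ioc_subset_Ioi_self, setIntegral_const]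
      simp [Measure.real, hx.le, mul_comm]
    rw [← hint]
    refine setIntegral_mono_on_ae hg hI measurableSet_Ioi ?_
    filter_upwards [h0, h1] with y hy0 hy1 hy
    by_cases hyx : y ≤ x
    · rw [indicator_of_mem (show y ∈ Ioc 0 x from ⟨hy, hyx⟩)]
      exact fEnt_ge β _ (hy0 hy)
    · rw [indicator_of_notMem (fun h => hyx h.2), hy1 (not_le.1 hyx)]
      simp [fEnt]
  · rw [integral_undef hI]
    nlinarith

/-- The infimum `x_ρ` is approached by points beyond which `ρ = 1` a.e., so the previous bound
passes to the limit. -/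
lemma integral_fEnt_ge (β X : ℝ) (ρ : ℝ → ℝ) (h : MemAdmSet X ρ) :
    -(Real.exp (β - 1) - β) * X ≤ ∫ y in Ioi (0:ℝ), fEnt β (ρ y) := by
  obtain ⟨⟨h0, -, -, hne⟩, hX⟩ := h
  have hc := exp_sub_nonneg β
  have key : ∀ z, X < z → -(Real.exp (β - 1) - β) * z ≤ ∫ y in Ioi (0:ℝ), fEnt β (ρ y) := by
    intro z hz
    obtain ⟨x, ⟨hx0, hx1⟩, hxz⟩ := exists_lt_of_csInf_lt hne (lt_of_le_of_lt hX hz)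
    have := integral_fEnt_ge_of_ae_one β x ρ h0 hx0 hx1
    nlinarith
  have ht : Tendsto (fun z => -(Real.exp (β - 1) - β) * z) (𝓝[>] X)
      (𝓝 (-(Real.exp (β - 1) - β) * X)) :=
    (Continuous.tendsto (by fun_prop) X).mono_left nhdsWithin_le_nhds
  exact le_of_tendsto ht (eventually_nhdsWithin_of_forall key)

lemma W2sq_nonneg (ρ ρt : ℝ → ℝ) : 0 ≤ W2sq ρ ρt := by
  refine Real.sInf_nonneg ?_
  rintro r ⟨γ, -, -, rfl⟩
  exact integral_nonneg fun p => sq_nonneg _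

lemma Jfun_ge (lam α β θ X0 τ mτ Kτ : ℝ) (ρ0 : ℝ → ℝ) (hlam : 0 < lam) (hθ : 0 < θ)
    (hτ0 : 0 < τ) (hτ1 : τ < 1) (hKτ : 0 < Kτ) (X : ℝ) (ρ : ℝ → ℝ) (h : MemAdmSet X ρ) :
    -(1/(2*lam)) * (α + Real.exp (β - 1) - β)^2
      - X0 * (α + Real.exp (β - 1) - β)
      ≤ Jfun lam α β θ τ Kτ mτ X0 ρ0 X ρ := by
  have hint := integral_fEnt_ge β X ρ h
  have hM : 0 ≤ θ * |Mdiff ρ ρ0| := by positivity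
  have hp : 0 ≤ ptau Kτ mτ (Mdiff ρ ρ0) := by unfold ptau; positivity
  have hd : lam * (X - X0)^2 / 2 ≤ dsq lam X0 ρ0 X ρ / (2 * τ) := by
    have hW := W2sq_nonneg ρ ρ0
    have hq : 0 ≤ lam * (X - X0)^2 := by positivity
    unfold dsq
    rw [div_le_div_iff₀ (by norm_num) (by positivity)]
    nlinarith
  have hsq : lam * (X - X0)^2 / 2 - (α + Real.exp (β - 1) - β) * X
      = lam / 2 * (X - X0 - (α + Real.exp (β - 1) - β) / lam)^2
        + (-(1/(2*lam)) * (α + Real.exp (β - 1) - β)^2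
          - X0 * (α + Real.exp (β - 1) - β)) := by
    field_simp
    ring
  have hpos : 0 ≤ lam / 2 * (X - X0 - (α + Real.exp (β - 1) - β) / lam)^2 := by positivity
  unfold Jfun Efun
  linarith

/-- lower bound for the JKO functional.
Under (H1)–(H2), `m_τ, K_τ > 0` and `0 < τ < 1`, for every `(X, ρ) ∈ 𝒜` one has
`J_{(X⁰,ρ⁰)}(X,ρ) ≥ −(1/(2λ))(α + e^{β−1} − β)² − X⁰(α + e^{β−1} − β)`;
in particular `J_{(X⁰,ρ⁰)}` is bounded below on `𝒜`. -/
theorem JKO_functional_bounded_below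
    (lam α β θ T X0 ρmin ρmax τ mτ Kτ : ℝ) (ρ0 ρ0' : ℝ → ℝ)
    (hlam : 0 < lam) (hα : 0 < α) (hθ : 0 < θ) (hβθ : β + θ < 1) (hT : 0 < T)
    (hH2 : H2 β θ X0 ρmin ρmax ρ0 ρ0')
    (hτ0 : 0 < τ) (hτ1 : τ < 1) (hmτ : 0 < mτ) (hKτ : 0 < Kτ) :
    (∀ X : ℝ, ∀ ρ : ℝ → ℝ, MemAdmSet X ρ →
      -(1/(2*lam)) * (α + Real.exp (β - 1) - β)^2
        - X0 * (α + Real.exp (β - 1) - β)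
        ≤ Jfun lam α β θ τ Kτ mτ X0 ρ0 X ρ) ∧
    BddBelow {r : ℝ | ∃ X : ℝ, ∃ ρ : ℝ → ℝ, MemAdmSet X ρ ∧
      r = Jfun lam α β θ τ Kτ mτ X0 ρ0 X ρ} := by
  have key := fun X ρ h =>
    Jfun_ge lam α β θ X0 τ mτ Kτ ρ0 hlam hθ hτ0 hτ1 hKτ X ρ h
  refine ⟨key, -(1/(2*lam)) * (α + Real.exp (β - 1) - β)^2
    - X0 * (α + Real.exp (β - 1) - β), ?_⟩
  rintro r ⟨X, ρ, h, rfl⟩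
  exact key X ρ h

end
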